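/- Suppose f ∈ H¹(I,ℝⁿ) with derivative f', and let u_ε be the minimizer of E_ε over H¹(I,ℝⁿ), with derivative u_ε'. Then for every p ∈ [1,2], ∫_I |u_ε'|_ε^p ≤ p ε^p (b − a) + ∫_I ‖f'‖^p. -/

import Mathlib

open MeasureTheory Set Filter
open scoped ENNReal

noncomputable section

/-- Square-integrability of `w` on the set `S`. -/
def SqIntOn {n : ℕ} (w : ℝ → EuclideanSpace ℝ (Fin n)) (S : Set ℝ) : Prop :=
  MeasureTheory.IntegrableOn (fun x => ‖w x‖ ^ 2) S

/-- `w` belongs to `H¹(I, ℝⁿ)` with (weak) derivative `w'`: it is continuous on `[a,b]`,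
`w'` is square-integrable on `I = Ioo a b`, and the fundamental theorem of calculus holds. -/
def InH1 {n : ℕ} (a b : ℝ) (w w' : ℝ → EuclideanSpace ℝ (Fin n)) : Prop :=
  ContinuousOn w (Set.Icc a b) ∧
  MeasureTheory.IntegrableOn (fun x => ‖w' x‖ ^ 2) (Set.Ioo a b) ∧
  ∀ x ∈ Set.Icc a b, ∀ y ∈ Set.Icc a b, w y - w x = ∫ t in x..y, w' t

/-- The regularized energy `E_ε` evaluated at `w ∈ H¹` with derivative `w'`. -/
def regEnergy {n : ℕ} (lam ε a b : ℝ) (f w w' : ℝ → EuclideanSpace ℝ (Fin n)) : ℝ :=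
  ∫ x in Set.Ioo a b, ((1 / (2 * lam)) * ‖w x - f x‖ ^ 2
    + Real.sqrt (‖w' x‖ ^ 2 + ε ^ 2) + (ε ^ 2 / 2) * ‖w' x‖ ^ 2)

/-- `u` (with derivative `u'`) minimizes `E_ε` over `H¹(I, ℝⁿ)`. -/
def IsMinimizerEps {n : ℕ} (lam ε a b : ℝ) (f u u' : ℝ → EuclideanSpace ℝ (Fin n)) : Prop :=
  InH1 a b u u' ∧ ∀ v v' : ℝ → EuclideanSpace ℝ (Fin n), InH1 a b v v' →
    regEnergy lam ε a b f u u' ≤ regEnergy lam ε a b f v v'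

/-!
Let `F v = v / |v|_ε + ε² v` be the gradient of the integrand and `G v = |v|_ε ^ (p - 2) v`. The
Euler–Lagrange equation says that `z = F u'` has a representative in `H¹` with `λ z' = u - f`,
vanishing at both end points. The radial profiles of `G` and of `K F - G` are nonnegative and
increasing for a suitable `K`, so `‖G v - G w‖² ≤ K ⟪G v - G w, F v - F w⟫`: hence `G = H ∘ F` for
some monotone Lipschitz `H`, and `q = H ∘ z` is an absolutely continuous representative of `G u'`
with `⟪q', u - f⟫ = λ ⟪q', z'⟫ ≥ 0`. Integrating by parts,
`∫ ⟪u' - f', G u'⟫ = -∫ ⟪u - f, q'⟫ ≤ 0`, and Young's inequality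
`|v|_ε ^ p ≤ p ε ^ p + ‖w‖ ^ p + p ⟪v - w, G v⟫` concludes.
-/

section InnerProduct

variable {E : Type*} [NormedAddCommGroup E] [InnerProductSpace ℝ E]

lemma mul_norm_sub_mul_norm_le_inner {x₁ x₂ y₁ y₂ : ℝ} (hx₁ : 0 ≤ x₁) (hx₂ : 0 ≤ x₂)
    (hy₁ : 0 ≤ y₁) (hy₂ : 0 ≤ y₂) (v w : E) :
    (x₁ * ‖v‖ - x₂ * ‖w‖) * (y₁ * ‖v‖ - y₂ * ‖w‖)
      ≤ inner ℝ (x₁ • v - x₂ • w) (y₁ • v - y₂ • w) := by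
  have cross_le : (x₁ * y₂ + x₂ * y₁) * inner ℝ v w ≤ (x₁ * y₂ + x₂ * y₁) * (‖v‖ * ‖w‖) :=
    mul_le_mul_of_nonneg_left (real_inner_le_norm v w) (by positivity)
  simp only [inner_sub_left, inner_sub_right, real_inner_smul_left, real_inner_smul_right,
    real_inner_self_eq_norm_sq, real_inner_comm v w] at cross_le ⊢
  linarith

lemma inner_radial_sub_nonneg {φ ψ : E → ℝ} (hφ : ∀ v, 0 ≤ φ v) (hψ : ∀ v, 0 ≤ ψ v)
    (hφ_mono : ∀ v w, ‖v‖ ≤ ‖w‖ → φ v * ‖v‖ ≤ φ w * ‖w‖)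
    (hψ_mono : ∀ v w, ‖v‖ ≤ ‖w‖ → ψ v * ‖v‖ ≤ ψ w * ‖w‖) (v w : E) :
    0 ≤ inner ℝ (φ v • v - φ w • w) (ψ v • v - ψ w • w) := by
  refine le_trans ?_ (mul_norm_sub_mul_norm_le_inner (hφ v) (hφ w) (hψ v) (hψ w) v w)
  rcases le_total ‖v‖ ‖w‖ with h | h
  · exact mul_nonneg_of_nonpos_of_nonpos (sub_nonpos.2 (hφ_mono v w h))
      (sub_nonpos.2 (hψ_mono v w h))
  · exact mul_nonneg (sub_nonneg.2 (hφ_mono w v h)) (sub_nonneg.2 (hψ_mono w v h))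

lemma inner_hasDerivAt_nonneg {P Q : ℝ → E} {p q : E} {x : ℝ}
    (hPQ : ∀ y, 0 ≤ inner ℝ (P y - P x) (Q y - Q x))
    (hP : HasDerivAt P p x) (hQ : HasDerivAt Q q x) : 0 ≤ inner ℝ p q := by
  refine ge_of_tendsto (hP.tendsto_slope.inner hQ.tendsto_slope) (.of_forall fun y => ?_)
  rw [slope_def_module, slope_def_module, real_inner_smul_left, real_inner_smul_right, ← mul_assoc]
  exact mul_nonneg (mul_self_nonneg _) (hPQ y)

/-- `G` is cocoercive with constant `K` relative to `F`. For `F = id` this is the usual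
cocoercivity of an operator; carrying `F` along makes the condition stable under changes of the
variable. -/
def CocoerciveAlong {α : Type*} (K : ℝ) (G F : α → E) : Prop :=
  ∀ x y, ‖G x - G y‖ ^ 2 ≤ K * inner ℝ (G x - G y) (F x - F y)

namespace CocoerciveAlong

variable {α : Type*} {K : ℝ} {G F : α → E}

lemma inner_nonneg (h : CocoerciveAlong K G F) (hK : 0 < K) (x y : α) :
    0 ≤ inner ℝ (G x - G y) (F x - F y) :=
  nonneg_of_mul_nonneg_right ((sq_nonneg _).trans (h x y)) hK

lemma norm_sub_le (h : CocoerciveAlong K G F) (hK : 0 ≤ K) (x y : α) :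
    ‖G x - G y‖ ≤ K * ‖F x - F y‖ := by
  have norm_sq_le : ‖G x - G y‖ * ‖G x - G y‖ ≤ ‖G x - G y‖ * (K * ‖F x - F y‖) :=
    calc ‖G x - G y‖ * ‖G x - G y‖ ≤ K * inner ℝ (G x - G y) (F x - F y) := by
          simpa only [sq] using h x y
      _ ≤ K * (‖G x - G y‖ * ‖F x - F y‖) := by gcongr; exact real_inner_le_norm _ _
      _ = ‖G x - G y‖ * (K * ‖F x - F y‖) := by ring
  rcases (norm_nonneg (G x - G y)).eq_or_lt with h0 | hpos
  · rw [← h0]; positivity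
  · exact le_of_mul_le_mul_left norm_sq_le hpos

lemma comp {β : Type*} (h : CocoerciveAlong K G F) (z : β → α) :
    CocoerciveAlong K (G ∘ z) (F ∘ z) :=
  fun x y => h (z x) (z y)

lemma exists_comp_eq (h : CocoerciveAlong K G F) (hK : 0 ≤ K) (hF : F.Surjective) :
    ∃ H : E → E, H ∘ F = G ∧ CocoerciveAlong K H id := by
  refine ⟨G ∘ Function.surjInv hF, funext fun x => ?_, fun v w => ?_⟩
  · have hle := h.norm_sub_le hK (Function.surjInv hF (F x)) x
    rw [Function.surjInv_eq hF, sub_self, norm_zero, mul_zero] at hle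
    exact sub_eq_zero.1 (norm_le_zero_iff.1 hle)
  · simpa only [Function.comp_apply, id_eq, Function.surjInv_eq hF] using
      h (Function.surjInv hF v) (Function.surjInv hF w)

end CocoerciveAlong

end InnerProduct

section RegNorm

variable {E : Type*} [NormedAddCommGroup E] {ε p : ℝ} {v w : E}

/-- The regularized norm `|v|_ε = √(‖v‖² + ε²)`. -/
def regNorm (ε : ℝ) (v : E) : ℝ := √(‖v‖ ^ 2 + ε ^ 2)

lemma regNorm_sq (ε : ℝ) (v : E) : regNorm ε v ^ 2 = ‖v‖ ^ 2 + ε ^ 2 :=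
  Real.sq_sqrt (by positivity)

lemma regNorm_nonneg (ε : ℝ) (v : E) : 0 ≤ regNorm ε v :=
  Real.sqrt_nonneg _

lemma regNorm_pos (hε : 0 < ε) (v : E) : 0 < regNorm ε v :=
  Real.sqrt_pos.2 (by positivity)

lemma le_regNorm (ε : ℝ) (v : E) : ε ≤ regNorm ε v :=
  Real.le_sqrt_of_sq_le (le_add_of_nonneg_left (sq_nonneg _))

lemma norm_le_regNorm (ε : ℝ) (v : E) : ‖v‖ ≤ regNorm ε v :=
  Real.le_sqrt_of_sq_le (le_add_of_nonneg_right (sq_nonneg _))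

lemma regNorm_mono (ε : ℝ) (h : ‖v‖ ≤ ‖w‖) : regNorm ε v ≤ regNorm ε w :=
  Real.sqrt_le_sqrt (by gcongr)

lemma continuous_regNorm (ε : ℝ) : Continuous (regNorm ε : E → ℝ) := by
  unfold regNorm; fun_prop

lemma inv_regNorm_mul_norm_mono (hε : 0 < ε) (h : ‖v‖ ≤ ‖w‖) :
    (regNorm ε v)⁻¹ * ‖v‖ ≤ (regNorm ε w)⁻¹ * ‖w‖ := by
  have hv := regNorm_pos hε v
  have hw := regNorm_pos hε w
  rw [inv_mul_eq_div, inv_mul_eq_div, div_le_div_iff₀ hv hw]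
  refine abs_le_of_sq_le_sq' ?_ (by positivity) |>.2
  rw [mul_pow, mul_pow, regNorm_sq, regNorm_sq]
  nlinarith [pow_le_pow_left₀ (norm_nonneg v) h 2, sq_nonneg ε]

lemma regNorm_rpow_sub_two_mul_norm_mono (hε : 0 < ε) (hp : 1 ≤ p) (h : ‖v‖ ≤ ‖w‖) :
    regNorm ε v ^ (p - 2) * ‖v‖ ≤ regNorm ε w ^ (p - 2) * ‖w‖ := by
  have factor (x : E) :
      regNorm ε x ^ (p - 2) * ‖x‖ = regNorm ε x ^ (p - 1) * ((regNorm ε x)⁻¹ * ‖x‖) := by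
    rw [← mul_assoc, ← Real.rpow_neg_one, ← Real.rpow_add (regNorm_pos hε x)]
    ring_nf
  rw [factor, factor]
  have hv := regNorm_nonneg ε v
  have hw := regNorm_nonneg ε w
  exact mul_le_mul (Real.rpow_le_rpow hv (regNorm_mono ε h) (by linarith))
    (inv_regNorm_mul_norm_mono hε h) (by positivity) (by positivity)

lemma regNorm_rpow_le_rpow_of_nonpos (hε : 0 < ε) (hp : p ≤ 0) (h : ‖v‖ ≤ ‖w‖) :
    regNorm ε w ^ p ≤ regNorm ε v ^ p :=
  Real.rpow_le_rpow_of_nonpos (regNorm_pos hε v) (regNorm_mono ε h) hp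

lemma regNorm_rpow_le_of_nonpos (hε : 0 < ε) (hp : p ≤ 0) (v : E) : regNorm ε v ^ p ≤ ε ^ p :=
  Real.rpow_le_rpow_of_nonpos hε (le_regNorm ε v) hp

end RegNorm

section Flux

variable {E : Type*} [NormedAddCommGroup E] [NormedSpace ℝ E] {ε : ℝ}

/-- The gradient of `v ↦ |v|_ε + (ε² / 2) ‖v‖²`. -/
def flux (ε : ℝ) (v : E) : E := (regNorm ε v)⁻¹ • v + ε ^ 2 • v

/-- The field `|v|_ε ^ (p - 2) v` against which the Euler–Lagrange equation is tested; it is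
`1 / p` times the gradient of `|v|_ε ^ p`. -/
def powField (ε p : ℝ) (v : E) : E := regNorm ε v ^ (p - 2) • v

lemma flux_zero (ε : ℝ) : flux ε (0 : E) = 0 := by simp [flux]

lemma powField_zero (ε p : ℝ) : powField ε p (0 : E) = 0 := by simp [powField]

lemma continuous_flux (hε : 0 < ε) : Continuous (flux ε : E → E) := by
  unfold flux
  exact (((continuous_regNorm ε).inv₀ fun v => (regNorm_pos hε v).ne').smul continuous_id).add
    (continuous_id.const_smul _)

lemma norm_flux_le (hε : 0 < ε) (v : E) : ‖flux ε v‖ ≤ (ε⁻¹ + ε ^ 2) * ‖v‖ := by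
  have hS := regNorm_pos hε v
  rw [flux, ← add_smul, norm_smul, Real.norm_of_nonneg (by positivity)]
  gcongr
  exact le_regNorm ε v

lemma memLp_flux {X : Type*} [MeasurableSpace X] {μ : Measure X} (hε : 0 < ε) {v : X → E}
    {p : ℝ≥0∞} (hv : MemLp v p μ) : MemLp (fun x => flux ε (v x)) p μ :=
  hv.of_le_mul ((continuous_flux hε).comp_aestronglyMeasurable hv.1)
    (.of_forall fun x => norm_flux_le hε (v x))

lemma flux_surjective (hε : 0 < ε) : (flux ε : E → E).Surjective := by
  intro w
  let g (s : ℝ) : ℝ := ((regNorm ε (s • w))⁻¹ + ε ^ 2) * s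
  have continuous_regNorm_smul : Continuous fun s : ℝ => regNorm ε (s • w) :=
    (continuous_regNorm ε).comp (by fun_prop)
  have hg : Continuous g :=
    ((continuous_regNorm_smul.inv₀ fun s => (regNorm_pos hε (s • w)).ne').add
      continuous_const).mul continuous_id
  have one_mem : (1 : ℝ) ∈ Icc (g 0) (g (ε ^ 2)⁻¹) := by
    refine ⟨by simp only [g, mul_zero, zero_le_one], ?_⟩
    have hS := regNorm_pos hε ((ε ^ 2)⁻¹ • w)
    simp only [g, add_mul, mul_inv_cancel₀ (pow_pos hε 2).ne']
    exact le_add_of_nonneg_left (by positivity)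
  obtain ⟨s, -, hs⟩ := intermediate_value_Icc (inv_nonneg.2 (sq_nonneg ε)) hg.continuousOn one_mem
  exact ⟨s • w, by rw [flux, ← add_smul, smul_smul, show _ * s = 1 from hs, one_smul]⟩

end Flux

section FluxInner

variable {E : Type*} [NormedAddCommGroup E] [InnerProductSpace ℝ E] {ε p : ℝ}

lemma cocoerciveAlong_powField_flux (hε : 0 < ε) (hp₁ : 1 ≤ p) (hp₂ : p ≤ 2) :
    CocoerciveAlong (ε ^ (p - 2) / ε ^ 2) (powField ε p : E → E) (flux ε) := by
  set K := ε ^ (p - 2) / ε ^ 2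
  have hK_nonneg : 0 ≤ K := by positivity
  let φ (v : E) : ℝ := regNorm ε v ^ (p - 2)
  let ψ (v : E) : ℝ := K * (regNorm ε v)⁻¹ + (ε ^ (p - 2) - φ v)
  have gap_nonneg (v : E) : 0 ≤ ε ^ (p - 2) - φ v :=
    sub_nonneg.2 (regNorm_rpow_le_of_nonpos hε (by linarith) v)
  have hφ (v : E) : 0 ≤ φ v := Real.rpow_nonneg (regNorm_nonneg ε v) _
  have hψ (v : E) : 0 ≤ ψ v :=
    add_nonneg (mul_nonneg hK_nonneg (inv_nonneg.2 (regNorm_nonneg ε v))) (gap_nonneg v)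
  have hψ_mono (v w : E) (h : ‖v‖ ≤ ‖w‖) : ψ v * ‖v‖ ≤ ψ w * ‖w‖ := by
    have hφ_anti : φ w ≤ φ v := regNorm_rpow_le_rpow_of_nonpos hε (by linarith) h
    simp only [ψ, add_mul, mul_assoc]
    exact add_le_add (mul_le_mul_of_nonneg_left (inv_regNorm_mul_norm_mono hε h) hK_nonneg)
      (mul_le_mul (sub_le_sub_left hφ_anti _) h (norm_nonneg v) (gap_nonneg w))
  have smul_flux_sub (v : E) : K • flux ε v - powField ε p v = ψ v • v := by
    have hKε : K * ε ^ 2 = ε ^ (p - 2) := div_mul_cancel₀ _ (by positivity)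
    simp only [flux, powField, ψ, φ, ← hKε]
    module
  intro v w
  have key := inner_radial_sub_nonneg hφ hψ
    (fun v w h => regNorm_rpow_sub_two_mul_norm_mono hε hp₁ h) hψ_mono v w
  rw [← smul_flux_sub, ← smul_flux_sub, sub_sub_sub_comm, ← smul_sub, inner_sub_right,
    real_inner_smul_right] at key
  rw [← real_inner_self_eq_norm_sq]
  exact sub_nonneg.1 key

lemma regNorm_rpow_sub_le_inner_powField (hε : 0 < ε) (hp : p ≤ 2) (v : E) :
    regNorm ε v ^ p - ε ^ p ≤ inner ℝ v (powField ε p v) := by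
  have rpow_eq {s : ℝ} (hs : 0 < s) : s ^ p = s ^ (p - 2) * s ^ 2 := by
    rw [← Real.rpow_natCast s 2, ← Real.rpow_add hs]; norm_num
  have hle := mul_le_mul_of_nonneg_right
    (regNorm_rpow_le_of_nonpos hε (sub_nonpos.2 hp) v) (sq_nonneg ε)
  rw [powField, real_inner_smul_right, real_inner_self_eq_norm_sq, rpow_eq hε,
    rpow_eq (regNorm_pos hε v), eq_sub_of_add_eq (regNorm_sq ε v).symm]
  linarith

lemma inner_powField_le (hε : 0 < ε) (p : ℝ) (v w : E) :
    inner ℝ w (powField ε p v) ≤ ‖w‖ * regNorm ε v ^ (p - 1) := by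
  have hS := regNorm_pos hε v
  refine (real_inner_le_norm _ _).trans (mul_le_mul_of_nonneg_left ?_ (norm_nonneg w))
  calc ‖powField ε p v‖ = regNorm ε v ^ (p - 2) * ‖v‖ := by
        rw [powField, norm_smul, Real.norm_of_nonneg (Real.rpow_nonneg hS.le _)]
    _ ≤ regNorm ε v ^ (p - 2) * regNorm ε v := by gcongr; exact norm_le_regNorm ε v
    _ = regNorm ε v ^ (p - 1) := by
        rw [← Real.rpow_add_one hS.ne']; ring_nf

lemma mul_rpow_sub_one_le {x y : ℝ} (hx : 0 ≤ x) (hy : 0 ≤ y) (hp : 1 ≤ p) :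
    p * (x * y ^ (p - 1)) ≤ x ^ p + (p - 1) * y ^ p := by
  have hp₀ : 0 < p := by linarith
  have weighted := Real.geom_mean_le_arith_mean2_weighted (inv_nonneg.2 hp₀.le)
    (sub_nonneg.2 (inv_le_one_of_one_le₀ hp)) (Real.rpow_nonneg hx p) (Real.rpow_nonneg hy p)
    (add_sub_cancel _ _)
  rw [Real.rpow_rpow_inv hx hp₀.ne', ← Real.rpow_mul hy, mul_one_sub, mul_inv_cancel₀ hp₀.ne']
    at weighted
  calc p * (x * y ^ (p - 1)) ≤ p * (p⁻¹ * x ^ p + (1 - p⁻¹) * y ^ p) := by gcongr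
    _ = x ^ p + (p - 1) * y ^ p := by field_simp

lemma regNorm_rpow_le (hε : 0 < ε) (hp₁ : 1 ≤ p) (hp₂ : p ≤ 2) (v w : E) :
    regNorm ε v ^ p ≤ p * ε ^ p + ‖w‖ ^ p + p * inner ℝ (v - w) (powField ε p v) := by
  have hp₀ : 0 ≤ p := by linarith
  have lower := mul_le_mul_of_nonneg_left (regNorm_rpow_sub_le_inner_powField hε hp₂ v) hp₀
  have upper := mul_le_mul_of_nonneg_left (inner_powField_le hε p v w) hp₀
  have young := mul_rpow_sub_one_le (norm_nonneg w) (regNorm_nonneg ε v) hp₁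
  rw [inner_sub_left]
  linarith

lemma regNorm_add_le (hε : 0 < ε) (v w : E) :
    regNorm ε (v + w) ≤ regNorm ε v + inner ℝ ((regNorm ε v)⁻¹ • v) w + 1 / (2 * ε) * ‖w‖ ^ 2 := by
  have hS := regNorm_pos hε v
  have sq_sub_sq : regNorm ε (v + w) ^ 2 - regNorm ε v ^ 2 = 2 * inner ℝ v w + ‖w‖ ^ 2 := by
    rw [regNorm_sq, regNorm_sq, norm_add_sq_real]; ring
  calc regNorm ε (v + w)
      ≤ regNorm ε v + (regNorm ε (v + w) ^ 2 - regNorm ε v ^ 2) / (2 * regNorm ε v) := by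
        rw [← sub_le_iff_le_add', le_div_iff₀ (by positivity)]
        nlinarith [sq_nonneg (regNorm ε (v + w) - regNorm ε v)]
    _ = regNorm ε v + inner ℝ ((regNorm ε v)⁻¹ • v) w + 1 / (2 * regNorm ε v) * ‖w‖ ^ 2 := by
        rw [sq_sub_sq, real_inner_smul_left]; field_simp; ring
    _ ≤ regNorm ε v + inner ℝ ((regNorm ε v)⁻¹ • v) w + 1 / (2 * ε) * ‖w‖ ^ 2 := by
        gcongr; exact le_regNorm ε v

end FluxInner

section EnergyDensity

variable {E : Type*} [NormedAddCommGroup E]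

/-- The integrand of the regularized energy, as a function of `q = w - f` and `v = w'`. -/
def energyDensity (lam ε : ℝ) (q v : E) : ℝ :=
  1 / (2 * lam) * ‖q‖ ^ 2 + regNorm ε v + ε ^ 2 / 2 * ‖v‖ ^ 2

lemma integrable_energyDensity {X : Type*} [MeasurableSpace X] {μ : Measure X} [IsFiniteMeasure μ]
    (lam ε : ℝ) {q v : X → E} (hq : Integrable (fun x => ‖q x‖ ^ 2) μ)
    (hv : Integrable (fun x => ‖v x‖ ^ 2) μ) :
    Integrable (fun x => energyDensity lam ε (q x) (v x)) μ := by
  have regNorm_integrable : Integrable (fun x => regNorm ε (v x)) μ := by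
    refine (hv.add (integrable_const (ε ^ 2 + 1))).mono'
      ((by fun_prop : Continuous fun s : ℝ => √(s + ε ^ 2)).comp_aestronglyMeasurable hv.1)
      (.of_forall fun x => ?_)
    have hsq := regNorm_sq ε (v x)
    rw [Real.norm_of_nonneg (regNorm_nonneg ε (v x)), Pi.add_apply]
    nlinarith [sq_nonneg (regNorm ε (v x) - 1)]
  exact ((hq.const_mul _).add regNorm_integrable).add (hv.const_mul _)

lemma energyDensity_zero_add_le (lam ε : ℝ) (q v : E) :
    energyDensity lam ε q 0 + ε ^ 2 / 2 * ‖v‖ ^ 2 ≤ energyDensity lam ε q v := by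
  have hmono := regNorm_mono (v := (0 : E)) ε (norm_zero.trans_le (norm_nonneg v))
  simp only [energyDensity, norm_zero]
  linarith

lemma energyDensity_add_le {E : Type*} [NormedAddCommGroup E] [InnerProductSpace ℝ E]
    (lam : ℝ) {ε : ℝ} (hε : 0 < ε) (q e v w : E) :
    energyDensity lam ε (q + e) (v + w) ≤ energyDensity lam ε q v
      + (inner ℝ (lam⁻¹ • q) e + inner ℝ (flux ε v) w)
      + (1 / (2 * lam) * ‖e‖ ^ 2 + (1 / (2 * ε) + ε ^ 2 / 2) * ‖w‖ ^ 2) := by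
  have upper := regNorm_add_le hε v w
  have half_inv : 1 / (2 * lam) = lam⁻¹ / 2 := by ring
  simp only [energyDensity, flux, inner_add_left, real_inner_smul_left, norm_add_sq_real,
    half_inv] at upper ⊢
  linarith

end EnergyDensity

section AbsolutelyContinuous

variable {a b : ℝ}

lemma absolutelyContinuousOnInterval_of_dist_le {X Y : Type*} [PseudoMetricSpace X]
    [PseudoMetricSpace Y] {f : ℝ → X} {g : ℝ → Y} {K : ℝ}
    (hf : AbsolutelyContinuousOnInterval f a b)
    (hfg : ∀ x ∈ uIcc a b, ∀ y ∈ uIcc a b, dist (g x) (g y) ≤ K * dist (f x) (f y)) :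
    AbsolutelyContinuousOnInterval g a b := by
  rw [absolutelyContinuousOnInterval_iff] at hf ⊢
  intro ε hε
  obtain ⟨δ, hδ, hfδ⟩ := hf (ε / (|K| + 1)) (by positivity)
  refine ⟨δ, hδ, fun I hI hlt => ?_⟩
  calc ∑ i ∈ Finset.range I.1, dist (g (I.2 i).1) (g (I.2 i).2)
      ≤ ∑ i ∈ Finset.range I.1, (|K| + 1) * dist (f (I.2 i).1) (f (I.2 i).2) := by
        refine Finset.sum_le_sum fun i hi => (hfg _ (hI.1 i hi).1 _ (hI.1 i hi).2).trans ?_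
        gcongr
        linarith [le_abs_self K]
    _ = (|K| + 1) * ∑ i ∈ Finset.range I.1, dist (f (I.2 i).1) (f (I.2 i).2) :=
        (Finset.mul_sum ..).symm
    _ < (|K| + 1) * (ε / (|K| + 1)) := by gcongr; exact hfδ I hI hlt
    _ = ε := by field_simp

variable {E : Type*} [NormedAddCommGroup E] [InnerProductSpace ℝ E] {P Q p q : ℝ → E}

lemma absolutelyContinuousOnInterval_inner (hP : AbsolutelyContinuousOnInterval P a b)
    (hQ : AbsolutelyContinuousOnInterval Q a b) :
    AbsolutelyContinuousOnInterval (fun x => inner ℝ (P x) (Q x)) a b := by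
  have norm_ac {R : ℝ → E} (hR : AbsolutelyContinuousOnInterval R a b) :
      AbsolutelyContinuousOnInterval (fun x => ‖R x‖) a b :=
    absolutelyContinuousOnInterval_of_dist_le (K := 1) hR fun x _ y _ => by
      rw [one_mul, dist_eq_norm (R x)]; exact dist_norm_norm_le (R x) (R y)
  have hP' := norm_ac hP
  have hQ' := norm_ac hQ
  have hPQ := norm_ac (hP.fun_sub hQ)
  simp only [real_inner_eq_norm_mul_self_add_norm_mul_self_sub_norm_sub_mul_self_div_two,
    div_eq_inv_mul]
  exact (((hP'.fun_mul hP').fun_add (hQ'.fun_mul hQ')).fun_sub (hPQ.fun_mul hPQ)).const_mul _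

lemma ae_deriv_inner_eq (hP : ∀ᵐ x ∂volume.restrict (Ioo a b), HasDerivAt P (p x) x)
    (hQ : ∀ᵐ x ∂volume.restrict (Ioo a b), HasDerivAt Q (q x) x) :
    deriv (fun x => inner ℝ (P x) (Q x)) =ᵐ[volume.restrict (Ioo a b)]
      fun x => inner ℝ (P x) (q x) + inner ℝ (p x) (Q x) := by
  filter_upwards [hP, hQ] with x hPx hQx using (hPx.inner ℝ hQx).deriv

lemma integrableOn_inner_deriv_add (hab : a ≤ b) (hP : AbsolutelyContinuousOnInterval P a b)
    (hQ : AbsolutelyContinuousOnInterval Q a b)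
    (hP' : ∀ᵐ x ∂volume.restrict (Ioo a b), HasDerivAt P (p x) x)
    (hQ' : ∀ᵐ x ∂volume.restrict (Ioo a b), HasDerivAt Q (q x) x) :
    IntegrableOn (fun x => inner ℝ (P x) (q x) + inner ℝ (p x) (Q x)) (Ioo a b) :=
  ((intervalIntegrable_iff_integrableOn_Ioo_of_le hab).1
    (absolutelyContinuousOnInterval_inner hP hQ).intervalIntegrable_deriv).congr
      (ae_deriv_inner_eq hP' hQ')

lemma integral_inner_deriv_add (hab : a ≤ b) (hP : AbsolutelyContinuousOnInterval P a b)
    (hQ : AbsolutelyContinuousOnInterval Q a b)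
    (hP' : ∀ᵐ x ∂volume.restrict (Ioo a b), HasDerivAt P (p x) x)
    (hQ' : ∀ᵐ x ∂volume.restrict (Ioo a b), HasDerivAt Q (q x) x) :
    ∫ x in Ioo a b, (inner ℝ (P x) (q x) + inner ℝ (p x) (Q x))
      = inner ℝ (P b) (Q b) - inner ℝ (P a) (Q a) := by
  rw [← integral_congr_ae (ae_deriv_inner_eq hP' hQ'), ← integral_Ioc_eq_integral_Ioo,
    ← intervalIntegral.integral_of_le hab,
    (absolutelyContinuousOnInterval_inner hP hQ).integral_deriv_eq_sub]

end AbsolutelyContinuous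

lemma memLp_Ioo_of_continuousOn_Icc {E : Type*} [NormedAddCommGroup E] {a b : ℝ} {w : ℝ → E}
    (hw : ContinuousOn w (Icc a b)) (p : ℝ≥0∞) : MemLp w p (volume.restrict (Ioo a b)) := by
  obtain ⟨C, hC⟩ := isCompact_Icc.exists_bound_of_continuousOn hw
  refine .of_bound ((hw.mono Ioo_subset_Icc_self).aestronglyMeasurable measurableSet_Ioo) C ?_
  filter_upwards [self_mem_ae_restrict measurableSet_Ioo] with x hx
  exact hC x (Ioo_subset_Icc_self hx)

lemma integrable_inner_of_memLp_two {E : Type*} [NormedAddCommGroup E] [InnerProductSpace ℝ E]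
    {X : Type*} [MeasurableSpace X] {μ : Measure X} {v w : X → E} (hv : MemLp v 2 μ)
    (hw : MemLp w 2 μ) : Integrable (fun x => (inner ℝ (v x) (w x) : ℝ)) μ :=
  (hv.norm.integrable_mul hw.norm).mono' (hv.1.inner hw.1)
    (.of_forall fun _ => norm_inner_le_norm _ _)

lemma integrable_norm_sq_of_memLp_two {E : Type*} [NormedAddCommGroup E] {X : Type*}
    [MeasurableSpace X] {μ : Measure X} {v : X → E} (hv : MemLp v 2 μ) :
    Integrable (fun x => ‖v x‖ ^ 2) μ :=
  (memLp_two_iff_integrable_sq_norm hv.1).1 hv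

lemma intervalIntegrable_of_memLp_two {E : Type*} [NormedAddCommGroup E] {a b x y : ℝ} {v : ℝ → E}
    (hv : MemLp v 2 (volume.restrict (Ioo a b))) (hx : x ∈ Icc a b) (hy : y ∈ Icc a b) :
    IntervalIntegrable v volume x y := by
  have hab := hx.1.trans hx.2
  refine ((intervalIntegrable_iff_integrableOn_Ioo_of_le hab).2
    (hv.integrable one_le_two)).mono_set ?_
  rw [uIcc_of_le hab]
  exact uIcc_subset_Icc hx hy

/-- `w` is the primitive on `[a, b]` of a genuine `L²` function `w'`. This strengthens `InH1`, which
only makes `‖w'‖ ^ 2` integrable: there `w'` may fail to be measurable, and then its interval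
integrals take the junk value `0`. -/
structure HasH1Deriv {E : Type*} [NormedAddCommGroup E] [NormedSpace ℝ E] (a b : ℝ)
    (w w' : ℝ → E) : Prop where
  memLp : MemLp w' 2 (volume.restrict (Ioo a b))
  sub_eq : ∀ x ∈ Icc a b, ∀ y ∈ Icc a b, w y - w x = ∫ t in x..y, w' t

namespace HasH1Deriv

variable {E : Type*} [NormedAddCommGroup E] [NormedSpace ℝ E] {a b c : ℝ} {v v' w w' : ℝ → E}

lemma primitive (hc : c ∈ Icc a b) (hw' : MemLp w' 2 (volume.restrict (Ioo a b))) :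
    HasH1Deriv a b (fun x => ∫ t in c..x, w' t) w' :=
  ⟨hw', fun _ hx _ hy => intervalIntegral.integral_interval_sub_left
    (intervalIntegrable_of_memLp_two hw' hc hy) (intervalIntegrable_of_memLp_two hw' hc hx)⟩

lemma const (a b : ℝ) (e : E) : HasH1Deriv a b (fun _ => e) (fun _ => 0) :=
  ⟨MemLp.zero, fun x _ y _ => by rw [sub_self, intervalIntegral.integral_zero]⟩

lemma add (hv : HasH1Deriv a b v v') (hw : HasH1Deriv a b w w') :
    HasH1Deriv a b (v + w) (v' + w') := by
  refine ⟨hv.memLp.add hw.memLp, fun x hx y hy => ?_⟩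
  simp only [Pi.add_apply]
  rw [intervalIntegral.integral_add (intervalIntegrable_of_memLp_two hv.memLp hx hy)
    (intervalIntegrable_of_memLp_two hw.memLp hx hy), ← hv.sub_eq x hx y hy, ← hw.sub_eq x hx y hy]
  abel

lemma const_smul (hw : HasH1Deriv a b w w') (k : ℝ) : HasH1Deriv a b (k • w) (k • w') := by
  refine ⟨hw.memLp.const_smul k, fun x hx y hy => ?_⟩
  simp only [Pi.smul_apply]
  rw [← smul_sub, hw.sub_eq x hx y hy, intervalIntegral.integral_smul]

lemma absolutelyContinuousOnInterval (hab : a ≤ b) (hw : HasH1Deriv a b w w') :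
    AbsolutelyContinuousOnInterval w a b := by
  have ha : a ∈ Icc a b := left_mem_Icc.2 hab
  have integrable_norm {x y : ℝ} (hx : x ∈ Icc a b) (hy : y ∈ Icc a b) :
      IntervalIntegrable (fun t => ‖w' t‖) volume x y :=
    (intervalIntegrable_of_memLp_two hw.memLp hx hy).norm
  refine absolutelyContinuousOnInterval_of_dist_le (K := 1)
    ((integrable_norm ha (right_mem_Icc.2 hab)).absolutelyContinuousOnInterval_intervalIntegral
      left_mem_uIcc) fun x hx y hy => ?_
  rw [uIcc_of_le hab] at hx hy
  rw [one_mul, dist_comm, dist_eq_norm, dist_comm, Real.dist_eq, hw.sub_eq x hx y hy,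
    intervalIntegral.integral_interval_sub_left (integrable_norm ha hy) (integrable_norm ha hx)]
  exact intervalIntegral.norm_integral_le_abs_integral_norm

lemma continuousOn (hab : a ≤ b) (hw : HasH1Deriv a b w w') : ContinuousOn w (Icc a b) := by
  rw [← uIcc_of_le hab]
  exact (hw.absolutelyContinuousOnInterval hab).continuousOn

lemma memLp_self (hab : a ≤ b) (hw : HasH1Deriv a b w w') :
    MemLp w 2 (volume.restrict (Ioo a b)) :=
  memLp_Ioo_of_continuousOn_Icc (hw.continuousOn hab) 2

lemma ae_hasDerivAt [CompleteSpace E] (hab : a ≤ b) (hw : HasH1Deriv a b w w') :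
    ∀ᵐ x ∂volume.restrict (Ioo a b), HasDerivAt w (w' x) x := by
  have ha : a ∈ Icc a b := left_mem_Icc.2 hab
  rw [ae_restrict_iff' measurableSet_Ioo]
  have hw'_integrable := intervalIntegrable_of_memLp_two hw.memLp ha (right_mem_Icc.2 hab)
  filter_upwards [hw'_integrable.ae_hasDerivAt_integral] with x hderiv hx
  have eq_near : w =ᶠ[nhds x] fun y => w a + ∫ t in a..y, w' t := by
    filter_upwards [Icc_mem_nhds hx.1 hx.2] with y hy
    rw [← hw.sub_eq a ha y hy, add_sub_cancel]
  exact ((hderiv (uIcc_of_le hab ▸ Ioo_subset_Icc_self hx) a left_mem_uIcc).const_add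
    (w a)).congr_of_eventuallyEq eq_near

end HasH1Deriv

section InH1

variable {n : ℕ} {a b : ℝ} {w w' : ℝ → EuclideanSpace ℝ (Fin n)}

lemma HasH1Deriv.inH1 (hab : a ≤ b) (hw : HasH1Deriv a b w w') : InH1 a b w w' :=
  ⟨hw.continuousOn hab, integrable_norm_sq_of_memLp_two hw.memLp, hw.sub_eq⟩

/- If `w'` is not integrable, the integral over one of `[a, x]`, `[x, b]` takes the junk value `0`,
as does the one over `[a, b]`, so `w` is constant. -/
lemma InH1.hasH1Deriv_or (hab : a ≤ b) (hw : InH1 a b w w') :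
    HasH1Deriv a b w w' ∨ HasH1Deriv a b w (fun _ => 0) := by
  obtain ⟨-, hw_sq, hw_sub⟩ := hw
  have ha : a ∈ Icc a b := left_mem_Icc.2 hab
  have hb : b ∈ Icc a b := right_mem_Icc.2 hab
  by_cases hint : IntervalIntegrable w' volume a b
  · rw [intervalIntegrable_iff_integrableOn_Ioo_of_le hab] at hint
    exact .inl ⟨(memLp_two_iff_integrable_sq_norm hint.1).2 hw_sq, hw_sub⟩
  have eq_of_not_integrable {x y : ℝ} (hx : x ∈ Icc a b) (hy : y ∈ Icc a b)
      (h : ¬ IntervalIntegrable w' volume x y) : w y = w x :=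
    sub_eq_zero.1 ((hw_sub x hx y hy).trans (intervalIntegral.integral_undef h))
  have eq_left {x : ℝ} (hx : x ∈ Icc a b) : w x = w a := by
    by_cases hax : IntervalIntegrable w' volume a x
    · have hxb : ¬ IntervalIntegrable w' volume x b := fun hxb => hint (hax.trans hxb)
      rw [← eq_of_not_integrable hx hb hxb, eq_of_not_integrable ha hb hint]
    · exact eq_of_not_integrable ha hx hax
  refine .inr ⟨MemLp.zero, fun x hx y hy => ?_⟩
  rw [eq_left hx, eq_left hy, sub_self, intervalIntegral.integral_zero]

end InH1

lemma ae_eq_zero_of_integral_norm_sq_nonpos {E : Type*} [NormedAddCommGroup E] {X : Type*}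
    [MeasurableSpace X] {μ : Measure X} {v : X → E} (hv : Integrable (fun x => ‖v x‖ ^ 2) μ)
    (h : ∫ x, ‖v x‖ ^ 2 ∂μ ≤ 0) : v =ᵐ[μ] 0 := by
  have nonneg : 0 ≤ fun x => ‖v x‖ ^ 2 := fun x => sq_nonneg _
  have integral_eq_zero := h.antisymm (integral_nonneg nonneg)
  filter_upwards [(integral_eq_zero_iff_of_nonneg nonneg hv).1 integral_eq_zero]
    with x hx using norm_eq_zero.1 (pow_eq_zero_iff two_ne_zero |>.1 hx)

section DuBoisReymond

variable {E : Type*} [NormedAddCommGroup E] [InnerProductSpace ℝ E] [CompleteSpace E]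
  {a b : ℝ} {A B : ℝ → E}

lemma integral_Ioo_eq_zero_of_weak (hA : MemLp A 2 (volume.restrict (Ioo a b)))
    (hAB : ∀ η η', HasH1Deriv a b η η' →
      ∫ x in Ioo a b, (inner ℝ (A x) (η x) + inner ℝ (B x) (η' x)) = 0) :
    ∫ x in Ioo a b, A x = 0 := by
  set m := ∫ x in Ioo a b, A x with hm
  have test_const := hAB _ _ (.const a b m)
  simp only [inner_zero_right, add_zero, real_inner_comm m] at test_const
  rwa [integral_inner (hA.integrable one_le_two), ← hm, inner_self_eq_zero] at test_const

/-- du Bois-Reymond: without boundary conditions on the test functions, the primitive `z` of `A`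
vanishes at both end points. -/
lemma exists_hasH1Deriv_of_weak (hab : a ≤ b) (hA : MemLp A 2 (volume.restrict (Ioo a b)))
    (hB : MemLp B 2 (volume.restrict (Ioo a b)))
    (hAB : ∀ η η', HasH1Deriv a b η η' →
      ∫ x in Ioo a b, (inner ℝ (A x) (η x) + inner ℝ (B x) (η' x)) = 0) :
    ∃ z, HasH1Deriv a b z A ∧ z a = 0 ∧ z b = 0 ∧ B =ᵐ[volume.restrict (Ioo a b)] z := by
  have ha : a ∈ Icc a b := left_mem_Icc.2 hab
  let z (x : ℝ) : E := ∫ t in a..x, A t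
  have hz : HasH1Deriv a b z A := .primitive ha hA
  have hza : z a = 0 := intervalIntegral.integral_same
  have hzb : z b = 0 := by
    rw [← integral_Ioo_eq_zero_of_weak hA hAB, ← integral_Ioc_eq_integral_Ioo,
      ← intervalIntegral.integral_of_le hab]
  have hBz : MemLp (B - z) 2 (volume.restrict (Ioo a b)) := hB.sub (hz.memLp_self hab)
  let η (x : ℝ) : E := ∫ t in a..x, (B - z) t
  have hη : HasH1Deriv a b η (B - z) := .primitive ha hBz
  have by_parts : ∫ x in Ioo a b, (inner ℝ (z x) ((B - z) x) + inner ℝ (A x) (η x)) = 0 := by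
    rw [integral_inner_deriv_add hab (hz.absolutelyContinuousOnInterval hab)
      (hη.absolutelyContinuousOnInterval hab) (hz.ae_hasDerivAt hab) (hη.ae_hasDerivAt hab), hza,
      hzb, inner_zero_left, inner_zero_left, sub_zero]
  have norm_sq_integral : ∫ x in Ioo a b, ‖(B - z) x‖ ^ 2 = 0 := by
    have hAη := integrable_inner_of_memLp_two hA (hη.memLp_self hab)
    have hsub := integral_sub (hAη.add (integrable_inner_of_memLp_two hB hBz))
      ((integrable_inner_of_memLp_two (hz.memLp_self hab) hBz).add hAη)
    simp only [Pi.add_apply, hAB η _ hη, by_parts, sub_zero] at hsub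
    rw [← hsub]
    refine integral_congr_ae (.of_forall fun x => ?_)
    simp only [Pi.sub_apply, ← real_inner_self_eq_norm_sq, inner_sub_left]
    ring
  refine ⟨z, hz, hza, hzb, ?_⟩
  filter_upwards [ae_eq_zero_of_integral_norm_sq_nonpos
    (integrable_norm_sq_of_memLp_two hBz) norm_sq_integral.le] with x hx
    using sub_eq_zero.1 hx

end DuBoisReymond

section Energy

variable {n : ℕ} {a b ε : ℝ} {f u u' η η' w w' : ℝ → EuclideanSpace ℝ (Fin n)}

lemma InH1.integrable_energyDensity (lam ε : ℝ) (hw : InH1 a b w w')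
    (hf : MemLp f 2 (volume.restrict (Ioo a b))) :
    Integrable (fun x => energyDensity lam ε (w x - f x) (w' x)) (volume.restrict (Ioo a b)) :=
  _root_.integrable_energyDensity lam ε
    (integrable_norm_sq_of_memLp_two ((memLp_Ioo_of_continuousOn_Icc hw.1 2).sub hf)) hw.2.1

lemma exists_regEnergy_add_smul_le (lam : ℝ) (hab : a ≤ b) (hε : 0 < ε)
    (hf : MemLp f 2 (volume.restrict (Ioo a b))) (hu : HasH1Deriv a b u u')
    (hη : HasH1Deriv a b η η') :
    ∃ C, ∀ t : ℝ, regEnergy lam ε a b f (u + t • η) (u' + t • η') ≤ regEnergy lam ε a b f u u'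
      + t * (∫ x in Ioo a b, (inner ℝ (lam⁻¹ • (u x - f x)) (η x) + inner ℝ (flux ε (u' x)) (η' x)))
      + t ^ 2 * C := by
  let L (x : ℝ) : ℝ := inner ℝ (lam⁻¹ • (u x - f x)) (η x) + inner ℝ (flux ε (u' x)) (η' x)
  let Q (x : ℝ) : ℝ := 1 / (2 * lam) * ‖η x‖ ^ 2 + (1 / (2 * ε) + ε ^ 2 / 2) * ‖η' x‖ ^ 2
  have hE := (hu.inH1 hab).integrable_energyDensity lam ε hf
  have hL : Integrable L (volume.restrict (Ioo a b)) :=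
    (integrable_inner_of_memLp_two (((hu.memLp_self hab).sub hf).const_smul lam⁻¹)
      (hη.memLp_self hab)).add (integrable_inner_of_memLp_two (memLp_flux hε hu.memLp) hη.memLp)
  have hQ : Integrable Q (volume.restrict (Ioo a b)) :=
    ((integrable_norm_sq_of_memLp_two (hη.memLp_self hab)).const_mul _).add
      ((integrable_norm_sq_of_memLp_two hη.memLp).const_mul _)
  refine ⟨∫ x in Ioo a b, Q x, fun t => ?_⟩
  have hEL : Integrable (fun x => energyDensity lam ε (u x - f x) (u' x) + t * L x)
      (volume.restrict (Ioo a b)) := hE.add (hL.const_mul t)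
  have pointwise (x : ℝ) : energyDensity lam ε ((u + t • η) x - f x) ((u' + t • η') x)
      ≤ energyDensity lam ε (u x - f x) (u' x) + t * L x + t ^ 2 * Q x := by
    have upper := energyDensity_add_le lam hε (u x - f x) (t • η x) (u' x) (t • η' x)
    rw [← add_sub_right_comm] at upper
    refine upper.trans_eq ?_
    simp only [L, Q, real_inner_smul_right, norm_smul, mul_pow, Real.norm_eq_abs, sq_abs]
    ring
  calc regEnergy lam ε a b f (u + t • η) (u' + t • η')
      ≤ ∫ x in Ioo a b, (energyDensity lam ε (u x - f x) (u' x) + t * L x + t ^ 2 * Q x) :=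
        integral_mono (((hu.add (hη.const_smul t)).inH1 hab).integrable_energyDensity lam ε hf)
          (hEL.add (hQ.const_mul _)) pointwise
    _ = regEnergy lam ε a b f u u' + t * (∫ x in Ioo a b, L x) + t ^ 2 * ∫ x in Ioo a b, Q x := by
        rw [integral_add hEL (hQ.const_mul _), integral_add hE (hL.const_mul t), integral_const_mul,
          integral_const_mul]
        rfl

end Energy

namespace IsMinimizerEps

variable {n : ℕ} {a b lam ε : ℝ} {f u u' η η' : ℝ → EuclideanSpace ℝ (Fin n)}

lemma hasH1Deriv (hab : a ≤ b) (hε : 0 < ε) (hf : MemLp f 2 (volume.restrict (Ioo a b)))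
    (hu : IsMinimizerEps lam ε a b f u u') : HasH1Deriv a b u u' := by
  rcases hu.1.hasH1Deriv_or hab with h | h₀
  · exact h
  have hu'_sq := hu.1.2.1.const_mul (ε ^ 2 / 2)
  have energy_zero_integrable := (h₀.inH1 hab).integrable_energyDensity lam ε hf
  have energy_le :
      regEnergy lam ε a b f u (fun _ => 0) + ε ^ 2 / 2 * ∫ x in Ioo a b, ‖u' x‖ ^ 2
        ≤ regEnergy lam ε a b f u (fun _ => 0) :=
    calc _ = ∫ x in Ioo a b, (energyDensity lam ε (u x - f x) 0 + ε ^ 2 / 2 * ‖u' x‖ ^ 2) := by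
          rw [integral_add energy_zero_integrable hu'_sq, integral_const_mul]
          rfl
      _ ≤ regEnergy lam ε a b f u u' :=
          integral_mono (energy_zero_integrable.add hu'_sq)
            (hu.1.integrable_energyDensity lam ε hf)
            fun x => energyDensity_zero_add_le lam ε (u x - f x) (u' x)
      _ ≤ regEnergy lam ε a b f u (fun _ => 0) := hu.2 _ _ (h₀.inH1 hab)
  have norm_sq_integral : ∫ x in Ioo a b, ‖u' x‖ ^ 2 ≤ 0 :=
    nonpos_of_mul_nonpos_right (add_le_iff_nonpos_right _ |>.1 energy_le) (by positivity)
  exact ⟨h₀.memLp.ae_eq (ae_eq_zero_of_integral_norm_sq_nonpos hu.1.2.1 norm_sq_integral).symm,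
    hu.1.2.2⟩

lemma integral_inner_eq_zero (hab : a ≤ b) (hε : 0 < ε)
    (hf : MemLp f 2 (volume.restrict (Ioo a b))) (hu : IsMinimizerEps lam ε a b f u u')
    (hη : HasH1Deriv a b η η') :
    ∫ x in Ioo a b, (inner ℝ (lam⁻¹ • (u x - f x)) (η x) + inner ℝ (flux ε (u' x)) (η' x)) = 0 := by
  have hu' := hu.hasH1Deriv hab hε hf
  obtain ⟨C, hC⟩ := exists_regEnergy_add_smul_le lam hab hε hf hu' hη
  set L := ∫ x in Ioo a b, (inner ℝ (lam⁻¹ • (u x - f x)) (η x) + inner ℝ (flux ε (u' x)) (η' x))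
  have variation_nonneg (t : ℝ) : 0 ≤ C * (t * t) + L * t + 0 := by
    linarith [(hu.2 _ _ ((hu'.add (hη.const_smul t)).inH1 hab)).trans (hC t)]
  have sq_nonpos := discrim_le_zero variation_nonneg
  rw [discrim, mul_zero, sub_zero] at sq_nonpos
  exact pow_eq_zero_iff two_ne_zero |>.1 (sq_nonpos.antisymm (sq_nonneg L))

lemma exists_flux_ae_eq (hab : a ≤ b) (hε : 0 < ε) (hf : MemLp f 2 (volume.restrict (Ioo a b)))
    (hu : IsMinimizerEps lam ε a b f u u') :
    ∃ z, HasH1Deriv a b z (fun x => lam⁻¹ • (u x - f x)) ∧ z a = 0 ∧ z b = 0 ∧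
      (fun x => flux ε (u' x)) =ᵐ[volume.restrict (Ioo a b)] z := by
  have hu' := hu.hasH1Deriv hab hε hf
  exact exists_hasH1Deriv_of_weak hab (((hu'.memLp_self hab).sub hf).const_smul lam⁻¹)
    (memLp_flux hε hu'.memLp) fun _ _ hη => hu.integral_inner_eq_zero hab hε hf hη

end IsMinimizerEps

section Composition

variable {E : Type*} [NormedAddCommGroup E] [InnerProductSpace ℝ E] {a b K : ℝ}

lemma CocoerciveAlong.absolutelyContinuousOnInterval {q z : ℝ → E} (h : CocoerciveAlong K q z)
    (hK : 0 ≤ K) (hz : AbsolutelyContinuousOnInterval z a b) :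
    AbsolutelyContinuousOnInterval q a b :=
  absolutelyContinuousOnInterval_of_dist_le hz fun x _ y _ => by
    simpa only [dist_eq_norm] using h.norm_sub_le hK x y

lemma ae_hasDerivAt_deriv_of_absolutelyContinuousOnInterval {V : Type*} [NormedAddCommGroup V]
    [NormedSpace ℝ V] [FiniteDimensional ℝ V] {q : ℝ → V}
    (hq : AbsolutelyContinuousOnInterval q a b) :
    ∀ᵐ x ∂volume.restrict (Ioo a b), HasDerivAt q (deriv q x) x := by
  rw [ae_restrict_iff' measurableSet_Ioo]
  filter_upwards [hq.boundedVariationOn.ae_differentiableAt_of_mem_uIcc] with x hdiff hx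
  exact (hdiff (Icc_subset_uIcc (Ioo_subset_Icc_self hx))).hasDerivAt

lemma exists_powField_ae_eq [FiniteDimensional ℝ E] {ε p : ℝ} {v z z' : ℝ → E} (hab : a ≤ b)
    (hε : 0 < ε) (hp₁ : 1 ≤ p) (hp₂ : p ≤ 2) (hz : HasH1Deriv a b z z') (hza : z a = 0)
    (hzb : z b = 0) (hvz : (fun x => flux ε (v x)) =ᵐ[volume.restrict (Ioo a b)] z) :
    ∃ q : ℝ → E, AbsolutelyContinuousOnInterval q a b ∧ q a = 0 ∧ q b = 0 ∧
      (fun x => powField ε p (v x)) =ᵐ[volume.restrict (Ioo a b)] q ∧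
      (∀ᵐ x ∂volume.restrict (Ioo a b), HasDerivAt q (deriv q x) x) ∧
      ∀ᵐ x ∂volume.restrict (Ioo a b), 0 ≤ inner ℝ (deriv q x) (z' x) := by
  have hK : 0 < ε ^ (p - 2) / ε ^ 2 := by positivity
  obtain ⟨H, hHF, hH⟩ := (cocoerciveAlong_powField_flux (E := E) hε hp₁ hp₂).exists_comp_eq hK.le
    (flux_surjective hε)
  have hH_zero : H 0 = 0 := by
    simpa only [Function.comp_apply, flux_zero, powField_zero] using congrFun hHF 0
  have hqz : CocoerciveAlong (ε ^ (p - 2) / ε ^ 2) (H ∘ z) z := hH.comp z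
  have hq := hqz.absolutelyContinuousOnInterval hK.le (hz.absolutelyContinuousOnInterval hab)
  have hq' := ae_hasDerivAt_deriv_of_absolutelyContinuousOnInterval hq
  refine ⟨H ∘ z, hq, by simp only [Function.comp_apply, hza, hH_zero],
    by simp only [Function.comp_apply, hzb, hH_zero], ?_, hq', ?_⟩
  · filter_upwards [hvz] with x hx
    rw [← hHF, Function.comp_apply, hx, Function.comp_apply]
  · filter_upwards [hq', hz.ae_hasDerivAt hab] with x hqx hzx
    exact inner_hasDerivAt_nonneg (fun y => hqz.inner_nonneg hK y x) hqx hzx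

end Composition

lemma integrable_norm_rpow_of_memLp_two {E : Type*} [NormedAddCommGroup E] {X : Type*}
    [MeasurableSpace X] {μ : Measure X} [IsFiniteMeasure μ] {v : X → E} {p : ℝ} (hp₀ : 0 < p)
    (hp₂ : p ≤ 2) (hv : MemLp v 2 μ) : Integrable (fun x => ‖v x‖ ^ p) μ := by
  have hp_le : ENNReal.ofReal p ≤ 2 := by
    rw [← ENNReal.ofReal_ofNat]
    exact ENNReal.ofReal_le_ofReal hp₂
  simpa only [ENNReal.toReal_ofReal hp₀.le] using (hv.mono_exponent hp_le).integrable_norm_rpow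
    (ENNReal.ofReal_pos.2 hp₀).ne' ENNReal.ofReal_ne_top

lemma IsMinimizerEps.integral_regNorm_rpow_le {n : ℕ} {a b lam ε p : ℝ}
    {f f' u u' : ℝ → EuclideanSpace ℝ (Fin n)} (hab : a ≤ b) (hlam : 0 < lam) (hε : 0 < ε)
    (hu : IsMinimizerEps lam ε a b f u u') (hf : HasH1Deriv a b f f') (hp₁ : 1 ≤ p)
    (hp₂ : p ≤ 2) :
    ∫ x in Ioo a b, regNorm ε (u' x) ^ p
      ≤ p * ε ^ p * (b - a) + ∫ x in Ioo a b, ‖f' x‖ ^ p := by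
  have hf_memLp := hf.memLp_self hab
  have hu' := hu.hasH1Deriv hab hε hf_memLp
  obtain ⟨z, hz, hza, hzb, hflux⟩ := hu.exists_flux_ae_eq hab hε hf_memLp
  obtain ⟨q, hq, hqa, hqb, hpow, hq', hmono⟩ :=
    exists_powField_ae_eq hab hε hp₁ hp₂ hz hza hzb hflux
  have huf :=
    (hu'.absolutelyContinuousOnInterval hab).fun_sub (hf.absolutelyContinuousOnInterval hab)
  have huf' : ∀ᵐ x ∂volume.restrict (Ioo a b),
      HasDerivAt (fun x => u x - f x) (u' x - f' x) x := by
    filter_upwards [hu'.ae_hasDerivAt hab, hf.ae_hasDerivAt hab] with x hux hfx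
      using hux.fun_sub hfx
  have by_parts_integrable := integrableOn_inner_deriv_add hab huf hq huf' hq'
  have by_parts := integral_inner_deriv_add hab huf hq huf' hq'
  rw [hqa, hqb, inner_zero_right, inner_zero_right, sub_zero] at by_parts
  have pointwise : ∀ᵐ x ∂volume.restrict (Ioo a b), regNorm ε (u' x) ^ p ≤ p * ε ^ p + ‖f' x‖ ^ p
      + p * (inner ℝ (u x - f x) (deriv q x) + inner ℝ (u' x - f' x) (q x)) := by
    filter_upwards [hpow, hmono] with x hpow_x hmono_x
    have young := regNorm_rpow_le hε hp₁ hp₂ (u' x) (f' x)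
    rw [real_inner_smul_right, real_inner_comm] at hmono_x
    have inner_nonneg := nonneg_of_mul_nonneg_right hmono_x (inv_pos.2 hlam)
    rw [hpow_x] at young
    linarith [mul_nonneg (zero_le_one.trans hp₁) inner_nonneg]
  have rhs_integrable : IntegrableOn (fun x => p * ε ^ p + ‖f' x‖ ^ p) (Ioo a b) :=
    (integrable_const _).add (integrable_norm_rpow_of_memLp_two (by linarith) hp₂ hf.memLp)
  calc ∫ x in Ioo a b, regNorm ε (u' x) ^ p
      ≤ ∫ x in Ioo a b, (p * ε ^ p + ‖f' x‖ ^ p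
          + p * (inner ℝ (u x - f x) (deriv q x) + inner ℝ (u' x - f' x) (q x))) :=
        integral_mono_of_nonneg (.of_forall fun x => Real.rpow_nonneg (regNorm_nonneg ε _) p)
          (rhs_integrable.add (by_parts_integrable.const_mul p)) pointwise
    _ = p * ε ^ p * (b - a) + ∫ x in Ioo a b, ‖f' x‖ ^ p := by
        rw [integral_add rhs_integrable (by_parts_integrable.const_mul p), integral_const_mul,
          by_parts, mul_zero, add_zero, integral_add (integrable_const _)
          (integrable_norm_rpow_of_memLp_two (by linarith) hp₂ hf.memLp), setIntegral_const,
          Real.volume_real_Ioo_of_le hab, smul_eq_mul, mul_comm (b - a)]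

/-- global estimate `∫_I |u_ε'|_ε^p ≤ p ε^p (b−a) + ∫_I ‖f'‖^p` for `p ∈ [1,2]`. -/
theorem minimizerEps_global_gradient_estimate
    {n : ℕ} (hn : 1 ≤ n) (a b : ℝ) (hab : a < b) (lam : ℝ) (hlam : 0 < lam)
    (ε : ℝ) (hε : 0 < ε)
    (f f' : ℝ → EuclideanSpace ℝ (Fin n)) (hf : InH1 a b f f')
    (u u' : ℝ → EuclideanSpace ℝ (Fin n)) (hu : IsMinimizerEps lam ε a b f u u')
    (p : ℝ) (hp1 : 1 ≤ p) (hp2 : p ≤ 2) :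
    (∫ x in Set.Ioo a b, Real.sqrt (‖u' x‖ ^ 2 + ε ^ 2) ^ p)
      ≤ p * ε ^ p * (b - a) + ∫ x in Set.Ioo a b, ‖f' x‖ ^ p := by
  rcases hf.hasH1Deriv_or hab.le with h | h₀
  · exact hu.integral_regNorm_rpow_le hab.le hlam hε h hp1 hp2
  · refine (hu.integral_regNorm_rpow_le hab.le hlam hε h₀ hp1 hp2).trans ?_
    have hp : p ≠ 0 := by linarith
    simp only [norm_zero, Real.zero_rpow hp, integral_zero, add_zero]
    exact le_add_of_nonneg_right (integral_nonneg fun x => Real.rpow_nonneg (norm_nonneg (f' x)) p)
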